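/- arXiv:2307.06438 — 2 statements merged into one kernel-verified Lean document; each statement's English description precedes it below -/
import Mathlib

section
/- Let W be the space of all real 8×8 matrices X such that X_{is}Φ_{sjkl} + X_{js}Φ_{iskl} + X_{ks}Φ_{ijsl} + X_{ls}Φ_{ijks} = 0 for all i,j,k,l ∈ {0,…,7} (the infinitesimal stabilizer of Φ under the standard action of gl(8,ℝ)). Then every X ∈ W is antisymmetric, and dim W = 21 (W is the Lie algebra spin(7) inside so(8)). -/
/-!
We work in ℝ⁸ with the standard basis `e₀, …, e₇`.  A `k`-form is a totally antisymmetric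
map `(Fin 8)^k → ℝ`; repeated indices are summed over `Fin 8` and `kd` is the Kronecker
delta.  `Phi` is the fundamental 4-form of the standard `Spin(7)`-structure on ℝ⁸,
`Φ = -e₀₁₂₇ + e₀₂₃₆ - e₀₃₄₇ - e₀₅₆₇ + e₀₁₄₆ + e₀₂₄₅ - e₀₁₃₅
     - e₃₄₅₆ - e₁₄₅₇ - e₁₂₅₆ - e₁₂₃₄ - e₂₃₅₇ - e₁₃₆₇ + e₂₄₆₇`.
-/

noncomputable section

/-- Kronecker delta on `Fin 8`. -/
def kd (a b : Fin 8) : ℝ := if a = b then 1 else 0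

/-- Component at the indices `(i,j,k,l)` of the wedge product `e_a ∧ e_b ∧ e_c ∧ e_d`
of standard coordinate 1-forms, normalized so that `(e_a ∧ e_b ∧ e_c ∧ e_d)_{abcd} = 1`;
it is the alternating sum of products of Kronecker deltas. -/
def wedge4 (a b c d i j k l : Fin 8) : ℝ :=
  Matrix.det !![kd a i, kd a j, kd a k, kd a l;
                kd b i, kd b j, kd b k, kd b l;
                kd c i, kd c j, kd c k, kd c l;
                kd d i, kd d j, kd d k, kd d l]

/-- The fundamental 4-form `Φ` of the standard `Spin(7)`-structure on `ℝ⁸`, in components: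
the totally antisymmetric 4-tensor with `Φ_{0127} = -1`, `Φ_{0236} = 1`, `Φ_{0347} = -1`,
`Φ_{0567} = -1`, `Φ_{0146} = 1`, `Φ_{0245} = 1`, `Φ_{0135} = -1`, `Φ_{3456} = -1`,
`Φ_{1457} = -1`, `Φ_{1256} = -1`, `Φ_{1234} = -1`, `Φ_{2357} = -1`, `Φ_{1367} = -1`,
`Φ_{2467} = 1`, all components not obtained from these by permutation being zero. -/
def Phi (i j k l : Fin 8) : ℝ :=
    -wedge4 0 1 2 7 i j k l + wedge4 0 2 3 6 i j k l - wedge4 0 3 4 7 i j k l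
  - wedge4 0 5 6 7 i j k l + wedge4 0 1 4 6 i j k l + wedge4 0 2 4 5 i j k l
  - wedge4 0 1 3 5 i j k l - wedge4 3 4 5 6 i j k l - wedge4 1 4 5 7 i j k l
  - wedge4 1 2 5 6 i j k l - wedge4 1 2 3 4 i j k l - wedge4 2 3 5 7 i j k l
  - wedge4 1 3 6 7 i j k l + wedge4 2 4 6 7 i j k l

/-- The infinitesimal action of `gl(8,ℝ)` on `Φ`:
`(X·Φ)_{ijkl} = X_{is}Φ_{sjkl} + X_{js}Φ_{iskl} + X_{ks}Φ_{ijsl} + X_{ls}Φ_{ijks}`. -/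
def actPhi : Matrix (Fin 8) (Fin 8) ℝ →ₗ[ℝ] (Fin 8 → Fin 8 → Fin 8 → Fin 8 → ℝ) where
  toFun X := fun i j k l =>
    ∑ s, (X i s * Phi s j k l + X j s * Phi i s k l + X k s * Phi i j s l + X l s * Phi i j k s)
  map_add' X Y := by
    funext i j k l
    simp only [Matrix.add_apply, Pi.add_apply, add_mul, Finset.sum_add_distrib]
    ring
  map_smul' c X := by
    funext i j k l
    simp only [Matrix.smul_apply, Pi.smul_apply, smul_eq_mul, RingHom.id_apply,
      Finset.mul_sum, mul_assoc, mul_add]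

/-- `W = spin(7)`: the infinitesimal stabilizer of `Φ` in `gl(8,ℝ)`, i.e. all real 8×8
matrices `X` with `X_{is}Φ_{sjkl} + X_{js}Φ_{iskl} + X_{ks}Φ_{ijsl} + X_{ls}Φ_{ijks} = 0`. -/
def Wstab : Submodule ℝ (Matrix (Fin 8) (Fin 8) ℝ) := LinearMap.ker actPhi

/-!
For any 4-form `φ` and matrix `X`, the sum of the squares of the components of `ψ = X · φ` is
`4 X_{is} ψ_{iabc} φ_{sabc}`, so `X` stabilizes `φ` as soon as the contractions
`φ_{iabc} (X · φ)_{jabc}` vanish. For a Cayley form in dimension 8 these contractions are linear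
in `X`, `Xᵀ`, `tr X` and the 2-form `P X = φ_{ijab} X_{ab}`: they equal
`24 Xᵀ + 18 (tr X) 1 + 12 P X`, which vanishes exactly when `X` is antisymmetric and `P X = 2 X`.
On 2-forms `P² = 12 - 4 P`, so `P` has the eigenvalues `2` and `-6`; as `tr P = 0`, the
28-dimensional space of 2-forms splits into eigenspaces of dimensions 21 and 7.

That `Φ` is a Cayley form comes from its `-6`-eigenspace, spanned by seven orthogonal 2-forms `ω_p`
of square norm 8: `Φ` is the identity of `Λ²` minus `∑ p, ω_p ⊗ ω_p`.
-/

open Finset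
open scoped Matrix

section FourForms

variable {ι R : Type*} [CommRing R]

/-- A 4-form on `R^ι`, given by its components. Antisymmetry under the three adjacent
transpositions of the indices amounts to total antisymmetry. -/
structure IsFourForm (φ : ι → ι → ι → ι → R) : Prop where
  swap₁₂ : ∀ i j k l, φ j i k l = -φ i j k l
  swap₂₃ : ∀ i j k l, φ i k j l = -φ i j k l
  swap₃₄ : ∀ i j k l, φ i j l k = -φ i j k l

namespace IsFourForm

variable {φ ψ : ι → ι → ι → ι → R}

theorem neg (hφ : IsFourForm φ) : IsFourForm (-φ) where
  swap₁₂ i j k l := congrArg Neg.neg (hφ.swap₁₂ i j k l)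
  swap₂₃ i j k l := congrArg Neg.neg (hφ.swap₂₃ i j k l)
  swap₃₄ i j k l := congrArg Neg.neg (hφ.swap₃₄ i j k l)

theorem add (hφ : IsFourForm φ) (hψ : IsFourForm ψ) : IsFourForm (φ + ψ) where
  swap₁₂ i j k l := by
    simp only [Pi.add_apply, hφ.swap₁₂ i j, hψ.swap₁₂ i j]; ring
  swap₂₃ i j k l := by simp only [Pi.add_apply, hφ.swap₂₃ i j, hψ.swap₂₃ i j]; ring
  swap₃₄ i j k l := by simp only [Pi.add_apply, hφ.swap₃₄ i j k, hψ.swap₃₄ i j k]; ring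

theorem sub (hφ : IsFourForm φ) (hψ : IsFourForm ψ) : IsFourForm (φ - ψ) :=
  sub_eq_add_neg φ ψ ▸ hφ.add hψ.neg

theorem swap_pairs (hφ : IsFourForm φ) (i j k l : ι) : φ k l i j = φ i j k l := by
  rw [hφ.swap₂₃, hφ.swap₃₄, hφ.swap₁₂, hφ.swap₂₃]
  simp only [neg_neg]

theorem eq_zero_of_eq₁₂ [NoZeroDivisors R] [CharZero R] (hφ : IsFourForm φ) (i k l : ι) :
    φ i i k l = 0 :=
  self_eq_neg.mp (hφ.swap₁₂ i i k l)

theorem eq_zero_of_eq₂₄ [NoZeroDivisors R] [CharZero R] (hφ : IsFourForm φ) (i j k : ι) :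
    φ i j k j = 0 := by
  rw [hφ.swap₃₄, neg_eq_zero]
  exact self_eq_neg.mp (hφ.swap₂₃ i j j k)

end IsFourForm

end FourForms

section InfinitesimalAction

variable {ι R : Type*} [Fintype ι] [CommRing R] {φ ψ : ι → ι → ι → ι → R}

/-- The action of `gl(ι, R)` on 4-tensors, as a linear function of the matrix; this is `actPhi`
for an arbitrary tensor in place of `Phi`. -/
def infinitesimalAction (φ : ι → ι → ι → ι → R) :
    Matrix ι ι R →ₗ[R] (ι → ι → ι → ι → R) where
  toFun X := fun i j k l =>
    ∑ s, (X i s * φ s j k l + X j s * φ i s k l + X k s * φ i j s l + X l s * φ i j k s)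
  map_add' X Y := by
    funext i j k l
    simp only [Matrix.add_apply, Pi.add_apply, ← sum_add_distrib]
    exact sum_congr rfl fun s _ => by ring
  map_smul' c X := by
    funext i j k l
    simp only [Matrix.smul_apply, Pi.smul_apply, smul_eq_mul, RingHom.id_apply, mul_sum]
    exact sum_congr rfl fun s _ => by ring

/-- The infinitesimal stabilizer of a 4-tensor in `gl(ι, R)`. -/
def infinitesimalStabilizer (φ : ι → ι → ι → ι → R) : Submodule R (Matrix ι ι R) :=
  LinearMap.ker (infinitesimalAction φ)

theorem infinitesimalAction_apply (φ : ι → ι → ι → ι → R) (X : Matrix ι ι R) (i j k l : ι) :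
    infinitesimalAction φ X i j k l =
      ∑ s, (X i s * φ s j k l + X j s * φ i s k l + X k s * φ i j s l + X l s * φ i j k s) :=
  rfl

theorem isFourForm_infinitesimalAction (hφ : IsFourForm φ) (X : Matrix ι ι R) :
    IsFourForm (infinitesimalAction φ X) where
  swap₁₂ i j k l := by
    simp only [infinitesimalAction_apply, ← sum_neg_distrib]
    refine sum_congr rfl fun s _ => ?_
    linear_combination X j s * hφ.swap₁₂ i s k l + X i s * hφ.swap₁₂ s j k l +
      X k s * hφ.swap₁₂ i j s l + X l s * hφ.swap₁₂ i j k s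
  swap₂₃ i j k l := by
    simp only [infinitesimalAction_apply, ← sum_neg_distrib]
    refine sum_congr rfl fun s _ => ?_
    linear_combination X i s * hφ.swap₂₃ s j k l + X k s * hφ.swap₂₃ i j s l +
      X j s * hφ.swap₂₃ i s k l + X l s * hφ.swap₂₃ i j k s
  swap₃₄ i j k l := by
    simp only [infinitesimalAction_apply, ← sum_neg_distrib]
    refine sum_congr rfl fun s _ => ?_
    linear_combination X i s * hφ.swap₃₄ s j k l + X j s * hφ.swap₃₄ i s k l +
      X l s * hφ.swap₃₄ i j k s + X k s * hφ.swap₃₄ i j s l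

theorem mul_sum_mul_left_comm (x : ι → R) (y : R) (g : ι → R) :
    y * ∑ s, x s * g s = ∑ s, x s * (y * g s) := by
  simp only [mul_sum, mul_left_comm]

theorem sum_sum_mul_left_comm {κ : Type*} [Fintype κ] (x : ι → R) (g : ι → κ → R) :
    ∑ a, ∑ s, x s * g s a = ∑ s, x s * ∑ a, g s a := by
  simp only [sum_comm (s := univ (α := κ)), mul_sum]

theorem IsFourForm.sum_mul_slot₃_eq_slot₂ (hψ : IsFourForm ψ) (hφ : IsFourForm φ) (X : Matrix ι ι R)
    (i j : ι) :
    ∑ a, ∑ b, ∑ c, ψ i a b c * ∑ s, X b s * φ j a s c =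
      ∑ a, ∑ b, ∑ c, ψ i a b c * ∑ s, X a s * φ j s b c := by
  rw [sum_comm]
  refine sum_congr rfl fun b _ => sum_congr rfl fun a _ => sum_congr rfl fun c _ => ?_
  simp only [hψ.swap₂₃ i b a, hφ.swap₂₃ j _ a, mul_neg, sum_neg_distrib, neg_mul, neg_neg]

theorem IsFourForm.sum_mul_slot₄_eq_slot₃ (hψ : IsFourForm ψ) (hφ : IsFourForm φ) (X : Matrix ι ι R)
    (i j : ι) :
    ∑ a, ∑ b, ∑ c, ψ i a b c * ∑ s, X c s * φ j a b s =
      ∑ a, ∑ b, ∑ c, ψ i a b c * ∑ s, X b s * φ j a s c := by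
  refine sum_congr rfl fun a _ => ?_
  rw [sum_comm]
  refine sum_congr rfl fun c _ => sum_congr rfl fun b _ => ?_
  simp only [hψ.swap₃₄ i a c b, hφ.swap₃₄ j a _ b, mul_neg, sum_neg_distrib, neg_mul, neg_neg]

theorem IsFourForm.sum_mul_infinitesimalAction_apply (hψ : IsFourForm ψ) (hφ : IsFourForm φ)
    (X : Matrix ι ι R) (i j : ι) :
    ∑ a, ∑ b, ∑ c, ψ i a b c * infinitesimalAction φ X j a b c =
      ∑ s, X j s * ∑ a, ∑ b, ∑ c, ψ i a b c * φ s a b c +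
        3 * ∑ a, ∑ s, X a s * ∑ b, ∑ c, ψ i a b c * φ j s b c := by
  have slot₁ : ∑ a, ∑ b, ∑ c, ψ i a b c * ∑ s, X j s * φ s a b c =
      ∑ s, X j s * ∑ a, ∑ b, ∑ c, ψ i a b c * φ s a b c := by
    simp only [mul_sum_mul_left_comm (X j), sum_sum_mul_left_comm (X j)]
  have slot₂ : ∑ a, ∑ b, ∑ c, ψ i a b c * ∑ s, X a s * φ j s b c =
      ∑ a, ∑ s, X a s * ∑ b, ∑ c, ψ i a b c * φ j s b c := by
    refine sum_congr rfl fun a _ => ?_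
    simp only [mul_sum_mul_left_comm (X a), sum_sum_mul_left_comm (X a)]
  simp only [infinitesimalAction_apply, sum_add_distrib, mul_add, hψ.sum_mul_slot₄_eq_slot₃ hφ,
    hψ.sum_mul_slot₃_eq_slot₂ hφ, slot₁, slot₂]
  ring

theorem IsFourForm.sum_mul_infinitesimalAction (hψ : IsFourForm ψ) (hφ : IsFourForm φ)
    (X : Matrix ι ι R) :
    ∑ i, ∑ a, ∑ b, ∑ c, ψ i a b c * infinitesimalAction φ X i a b c =
      4 * ∑ i, ∑ s, X i s * ∑ a, ∑ b, ∑ c, ψ i a b c * φ s a b c := by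
  have slot₂ : ∑ i, ∑ a, ∑ s, X a s * ∑ b, ∑ c, ψ i a b c * φ i s b c =
      ∑ i, ∑ s, X i s * ∑ a, ∑ b, ∑ c, ψ i a b c * φ s a b c := by
    rw [sum_comm]
    refine sum_congr rfl fun a _ => ?_
    rw [sum_sum_mul_left_comm]
    refine sum_congr rfl fun s _ => congrArg _ <| sum_congr rfl fun i _ =>
      sum_congr rfl fun b _ => sum_congr rfl fun c _ => ?_
    rw [hψ.swap₁₂ a, hφ.swap₁₂ s, neg_mul_neg]
  simp only [hψ.sum_mul_infinitesimalAction_apply hφ, sum_add_distrib, ← mul_sum, slot₂]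
  ring

end InfinitesimalAction

section Wedge2

variable {ι R : Type*} [DecidableEq ι] [CommRing R]

/-- The elementary 2-form `e_a ∧ e_b` as an antisymmetric matrix. -/
def wedge2 (a b : ι) : Matrix ι ι R :=
  Matrix.single a b 1 - Matrix.single b a 1

theorem wedge2_apply (a b i j : ι) :
    wedge2 a b i j =
      (1 : Matrix ι ι R) a i * (1 : Matrix ι ι R) b j -
        (1 : Matrix ι ι R) b i * (1 : Matrix ι ι R) a j := by
  simp only [wedge2, Matrix.sub_apply, Matrix.single_apply, Matrix.one_apply, ite_and, ite_mul,
    one_mul, zero_mul]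

theorem wedge2_swap (a b : ι) : wedge2 b a = -(wedge2 a b : Matrix ι ι R) :=
  (neg_sub _ _).symm

theorem sum_wedge2_mul [Fintype ι] (a b : ι) (X : Matrix ι ι R) :
    ∑ i, ∑ j, wedge2 a b i j * X i j = X a b - X b a := by
  simp [wedge2, sub_mul, Matrix.single_apply, ite_and, sum_sub_distrib]

theorem wedge2_comm (i j k l : ι) : (wedge2 k l i j : R) = wedge2 i j k l := by
  simp only [wedge2_apply, Matrix.one_apply, eq_comm]
  ring

theorem sum_wedge2_mul_wedge2 [Fintype ι] (i j k l : ι) :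
    ∑ a, ∑ b, (wedge2 a b i j * wedge2 a b k l : R) = 2 * wedge2 i j k l := by
  calc ∑ a, ∑ b, (wedge2 a b i j * wedge2 a b k l : R)
      = ∑ a, ∑ b, wedge2 i j a b * wedge2 k l a b := by
        simp only [wedge2_comm i j, wedge2_comm k l]
    _ = 2 * wedge2 i j k l := by
        rw [sum_wedge2_mul, wedge2_comm i j k l, wedge2_comm j i k l, wedge2_swap i j,
          Matrix.neg_apply]
        ring

theorem sum_wedge2_apply [Fintype ι] (i j : ι) :
    ∑ a, wedge2 i a j a = (Fintype.card ι - 1) * (1 : Matrix ι ι R) i j := by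
  have contraction : ∑ a, (1 : Matrix ι ι R) a j * (1 : Matrix ι ι R) i a =
      (1 : Matrix ι ι R) i j := by
    simp only [mul_comm, ← Matrix.mul_apply, Matrix.mul_one]
  simp only [wedge2_apply, Matrix.one_apply_eq, mul_one, sum_sub_distrib, sum_const, card_univ,
    nsmul_eq_mul, contraction]
  ring

theorem sum_mul_wedge2_apply [Fintype ι] (X : Matrix ι ι R) (i j : ι) :
    ∑ a, ∑ b, X a b * wedge2 i a j b = X.trace * (1 : Matrix ι ι R) i j - X j i := by
  have diagonal : ∑ a, ∑ b, X a b * ((1 : Matrix ι ι R) i j * (1 : Matrix ι ι R) a b) =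
      X.trace * (1 : Matrix ι ι R) i j := by
    simp [Matrix.one_apply, Matrix.trace]
  have corner : ∑ a, ∑ b, X a b * ((1 : Matrix ι ι R) a j * (1 : Matrix ι ι R) i b) = X j i := by
    simp [Matrix.one_apply]
  simp only [wedge2_apply, mul_sub, sum_sub_distrib, diagonal, corner]

end Wedge2

section TwoFormOperator

variable {ι R : Type*} [Fintype ι] [CommRing R] {φ : ι → ι → ι → ι → R}

/-- The operator `X ↦ φ_{ijab} X_{ab}` by which a 4-form acts on 2-forms, extended to all
matrices. -/
def twoFormOperator (φ : ι → ι → ι → ι → R) : Matrix ι ι R →ₗ[R] Matrix ι ι R where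
  toFun X := Matrix.of fun i j => ∑ a, ∑ b, φ i j a b * X a b
  map_add' X Y := by
    ext i j
    simp only [Matrix.of_apply, Matrix.add_apply, mul_add, sum_add_distrib]
  map_smul' c X := by
    ext i j
    simp only [Matrix.of_apply, Matrix.smul_apply, smul_eq_mul, mul_left_comm _ c, mul_sum,
      RingHom.id_apply]

theorem twoFormOperator_apply (φ : ι → ι → ι → ι → R) (X : Matrix ι ι R) (i j : ι) :
    twoFormOperator φ X i j = ∑ a, ∑ b, φ i j a b * X a b :=
  rfl

namespace IsFourForm

theorem transpose_twoFormOperator (hφ : IsFourForm φ) (X : Matrix ι ι R) :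
    (twoFormOperator φ X)ᵀ = -twoFormOperator φ X := by
  ext i j
  simp only [Matrix.transpose_apply, Matrix.neg_apply, twoFormOperator_apply, hφ.swap₁₂ i j,
    neg_mul, sum_neg_distrib]

theorem twoFormOperator_transpose (hφ : IsFourForm φ) (X : Matrix ι ι R) :
    twoFormOperator φ Xᵀ = -twoFormOperator φ X := by
  ext i j
  simp only [twoFormOperator_apply, Matrix.neg_apply, Matrix.transpose_apply, ← sum_neg_distrib]
  rw [sum_comm]
  refine sum_congr rfl fun a _ => sum_congr rfl fun b _ => ?_
  rw [hφ.swap₃₄, neg_mul]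

theorem trace_twoFormOperator_apply [NoZeroDivisors R] [CharZero R] (hφ : IsFourForm φ)
    (X : Matrix ι ι R) : (twoFormOperator φ X).trace = 0 := by
  simp [Matrix.trace, twoFormOperator_apply, hφ.eq_zero_of_eq₁₂]

end IsFourForm

end TwoFormOperator

section CayleyForm

variable {ι R : Type*} [Fintype ι] [DecidableEq ι] [CommRing R] {φ : ι → ι → ι → ι → R}

/-- A 4-form satisfying the contraction identity
`φ_{ijab} φ_{klab} = 6 (δ_{ik} δ_{jl} - δ_{jk} δ_{il}) - 4 φ_{ijkl}` of the fundamental 4-form of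
a `Spin(7)`-structure. The sign of the last term selects `φ` rather than `-φ`. -/
structure IsCayleyForm (φ : ι → ι → ι → ι → R) : Prop extends IsFourForm φ where
  contract₂ : ∀ i j k l, ∑ a, ∑ b, φ i j a b * φ k l a b = 6 * wedge2 i j k l - 4 * φ i j k l

namespace IsCayleyForm

theorem twoFormOperator_twoFormOperator (hφ : IsCayleyForm φ) (X : Matrix ι ι R) :
    twoFormOperator φ (twoFormOperator φ X) =
      (6 : R) • (X - Xᵀ) - (4 : R) • twoFormOperator φ X := by
  ext i j
  calc ∑ a, ∑ b, φ i j a b * ∑ k, ∑ l, φ a b k l * X k l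
      = ∑ k, ∑ l, (∑ a, ∑ b, φ i j a b * φ k l a b) * X k l := by
        simp only [mul_sum, sum_mul]
        rw [sum_comm_cycle]
        refine sum_congr rfl fun k _ => ?_
        rw [sum_comm_cycle]
        simp only [hφ.swap_pairs k, mul_assoc]
    _ = 6 * (X i j - X j i) - 4 * twoFormOperator φ X i j := by
        simp only [hφ.contract₂, sub_mul, sum_sub_distrib, mul_assoc, ← mul_sum, sum_wedge2_mul,
          twoFormOperator_apply]

theorem contract₃ [NoZeroDivisors R] [CharZero R] (hφ : IsCayleyForm φ) (i j : ι) :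
    ∑ a, ∑ b, ∑ c, φ i a b c * φ j a b c =
      6 * (Fintype.card ι - 1) * (1 : Matrix ι ι R) i j := by
  simp only [hφ.contract₂, hφ.eq_zero_of_eq₂₄, mul_zero, sub_zero, ← mul_sum, sum_wedge2_apply,
    mul_assoc]

theorem sum_mul_infinitesimalAction_apply [NoZeroDivisors R] [CharZero R] (hφ : IsCayleyForm φ)
    (X : Matrix ι ι R) (i j : ι) :
    ∑ a, ∑ b, ∑ c, φ i a b c * infinitesimalAction φ X j a b c =
      6 * (Fintype.card ι - 4) * X j i + 18 * X.trace * (1 : Matrix ι ι R) i j +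
        12 * twoFormOperator φ X i j := by
  have slot₁ : ∑ s, X j s * (6 * (Fintype.card ι - 1) * (1 : Matrix ι ι R) i s) =
      6 * (Fintype.card ι - 1) * X j i := by
    simp [Matrix.one_apply, mul_comm]
  have slot₂ : ∑ a, ∑ s, X a s * (6 * wedge2 i a j s - 4 * φ i a j s) =
      6 * (X.trace * (1 : Matrix ι ι R) i j - X j i) + 4 * twoFormOperator φ X i j := by
    simp only [hφ.swap₂₃ i j, mul_neg, sub_neg_eq_add, mul_add, sum_add_distrib,
      mul_left_comm (X _ _), ← mul_sum, sum_mul_wedge2_apply, twoFormOperator_apply,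
      mul_comm (X _ _) (φ _ _ _ _)]
  rw [hφ.toIsFourForm.sum_mul_infinitesimalAction_apply hφ.toIsFourForm]
  simp only [hφ.contract₃, slot₁]
  simp only [hφ.contract₂, slot₂]
  ring

end IsCayleyForm

end CayleyForm

section Stabilizer

variable {ι : Type*} [Fintype ι]

theorem IsFourForm.mem_infinitesimalStabilizer_iff {R : Type*} [CommRing R] [LinearOrder R]
    [IsStrictOrderedRing R] {φ : ι → ι → ι → ι → R} (hφ : IsFourForm φ) {X : Matrix ι ι R} :
    X ∈ infinitesimalStabilizer φ ↔
      ∀ i j, ∑ a, ∑ b, ∑ c, φ i a b c * infinitesimalAction φ X j a b c = 0 := by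
  refine ⟨fun hX i j => ?_, fun normal => ?_⟩
  · simp [LinearMap.mem_ker.mp hX]
  have sum_sq : ∑ i, ∑ a, ∑ b, ∑ c, infinitesimalAction φ X i a b c ^ 2 = 0 := by
    simp only [sq, (isFourForm_infinitesimalAction hφ X).sum_mul_infinitesimalAction hφ,
      mul_comm (infinitesimalAction φ X _ _ _ _), normal, mul_zero, sum_const_zero]
  refine LinearMap.mem_ker.mpr <| funext fun i => funext fun a => funext fun b => funext fun c => ?_
  simp (disch := intros; positivity) only [sum_eq_zero_iff_of_nonneg, mem_univ, forall_const,
    sq_eq_zero_iff] at sum_sq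
  exact sum_sq i a b c

variable [DecidableEq ι] {𝕜 : Type*} [Field 𝕜] [LinearOrder 𝕜] [IsStrictOrderedRing 𝕜]
  {φ : ι → ι → ι → ι → 𝕜} {X : Matrix ι ι 𝕜}

namespace IsCayleyForm

theorem mem_infinitesimalStabilizer_iff_normal (hφ : IsCayleyForm φ) :
    X ∈ infinitesimalStabilizer φ ↔
      (6 * (Fintype.card ι - 4) : 𝕜) • Xᵀ + (18 * X.trace) • (1 : Matrix ι ι 𝕜) +
        (12 : 𝕜) • twoFormOperator φ X = 0 := by
  simp only [hφ.toIsFourForm.mem_infinitesimalStabilizer_iff, hφ.sum_mul_infinitesimalAction_apply,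
    ← Matrix.ext_iff, Matrix.add_apply, Matrix.smul_apply, Matrix.transpose_apply,
    Matrix.zero_apply, smul_eq_mul]

theorem mem_infinitesimalStabilizer_iff (hφ : IsCayleyForm φ) (hι : Fintype.card ι = 8) :
    X ∈ infinitesimalStabilizer φ ↔ Xᵀ = -X ∧ twoFormOperator φ X = (2 : 𝕜) • X := by
  have coeff : (6 * (Fintype.card ι - 4) : 𝕜) = 24 := by rw [hι]; norm_num
  rw [hφ.mem_infinitesimalStabilizer_iff_normal, coeff]
  constructor
  · intro normal
    have trace_eq_zero : X.trace = 0 := by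
      have h := congrArg Matrix.trace normal
      simp only [Matrix.trace_add, Matrix.trace_smul, Matrix.trace_transpose, Matrix.trace_one, hι,
        hφ.trace_twoFormOperator_apply, Matrix.trace_zero, smul_eq_mul] at h
      push_cast at h
      linear_combination h / 168
    simp only [trace_eq_zero, mul_zero, zero_smul, add_zero] at normal
    have antisymmetric : Xᵀ = -X := by
      have normal_transpose := congrArg Matrix.transpose normal
      simp only [Matrix.transpose_add, Matrix.transpose_smul, Matrix.transpose_transpose,
        hφ.transpose_twoFormOperator, Matrix.transpose_zero] at normal_transpose
      linear_combination (norm := module)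
        (1 / 24 : 𝕜) • normal + (1 / 24 : 𝕜) • normal_transpose
    rw [antisymmetric] at normal
    exact ⟨antisymmetric, by linear_combination (norm := module) (1 / 12 : 𝕜) • normal⟩
  · rintro ⟨antisymmetric, eigen⟩
    have trace_eq_zero : X.trace = 0 :=
      self_eq_neg.mp (by rw [← Matrix.trace_neg, ← antisymmetric, Matrix.trace_transpose])
    rw [antisymmetric, eigen, trace_eq_zero]
    module

end IsCayleyForm

end Stabilizer

section Projection

variable {ι R : Type*} [Fintype ι] [CommRing R]

theorem trace_end_matrix [DecidableEq ι] (f : Matrix ι ι R →ₗ[R] Matrix ι ι R) :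
    LinearMap.trace R (Matrix ι ι R) f = ∑ i, ∑ j, f (Matrix.single i j 1) i j := by
  rw [LinearMap.trace_eq_matrix_trace R (Matrix.stdBasis R ι ι)]
  simp only [Matrix.trace, Matrix.diag_apply, LinearMap.toMatrix_apply, Fintype.sum_prod_type,
    Matrix.stdBasis_eq_single]
  rfl

theorem trace_transposeLinearEquiv : LinearMap.trace R (Matrix ι ι R)
    (Matrix.transposeLinearEquiv ι ι R R).toLinearMap = Fintype.card ι := by
  classical
  simp [trace_end_matrix, Matrix.single_apply, ite_and]

theorem IsFourForm.trace_twoFormOperator [NoZeroDivisors R] [CharZero R]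
    {φ : ι → ι → ι → ι → R} (hφ : IsFourForm φ) :
    LinearMap.trace R (Matrix ι ι R) (twoFormOperator φ) = 0 := by
  classical
  simp [trace_end_matrix, twoFormOperator_apply, Matrix.single_apply, ite_and,
    hφ.eq_zero_of_eq₂₄]

variable {𝕜 : Type*} [Field 𝕜] {φ : ι → ι → ι → ι → 𝕜}

/-- On matrices over an index set of cardinality 8, and for a Cayley form `φ`, the projection onto
the infinitesimal stabilizer: it annihilates symmetric matrices, and `twoFormOperator φ` has the
eigenvalues `2` (on the stabilizer) and `-6` on antisymmetric ones. -/
def stabilizerProjection (φ : ι → ι → ι → ι → 𝕜) : Matrix ι ι 𝕜 →ₗ[𝕜] Matrix ι ι 𝕜 :=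
  (8⁻¹ : 𝕜) • ((3 : 𝕜) • (LinearMap.id - (Matrix.transposeLinearEquiv ι ι 𝕜 𝕜).toLinearMap) +
    twoFormOperator φ)

theorem stabilizerProjection_apply (φ : ι → ι → ι → ι → 𝕜) (X : Matrix ι ι 𝕜) :
    stabilizerProjection φ X = (8⁻¹ : 𝕜) • ((3 : 𝕜) • (X - Xᵀ) + twoFormOperator φ X) :=
  rfl

theorem IsFourForm.trace_stabilizerProjection [CharZero 𝕜] (hφ : IsFourForm φ) :
    LinearMap.trace 𝕜 (Matrix ι ι 𝕜) (stabilizerProjection φ) =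
      3 / 8 * (Fintype.card ι * (Fintype.card ι - 1)) := by
  simp only [stabilizerProjection, map_smul, map_add, map_sub, LinearMap.trace_id,
    trace_transposeLinearEquiv, hφ.trace_twoFormOperator, Module.finrank_matrix, smul_eq_mul,
    Module.finrank_self]
  push_cast
  ring

variable [DecidableEq ι] [LinearOrder 𝕜] [IsStrictOrderedRing 𝕜]

theorem IsCayleyForm.isProj_stabilizerProjection (hφ : IsCayleyForm φ)
    (hι : Fintype.card ι = 8) :
    LinearMap.IsProj (infinitesimalStabilizer φ) (stabilizerProjection φ) where
  map_mem X := by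
    rw [hφ.mem_infinitesimalStabilizer_iff hι, stabilizerProjection_apply]
    constructor
    · simp only [Matrix.transpose_smul, Matrix.transpose_add, Matrix.transpose_sub,
        Matrix.transpose_transpose, hφ.transpose_twoFormOperator]
      module
    · simp only [map_smul, map_add, map_sub, hφ.twoFormOperator_transpose,
        hφ.twoFormOperator_twoFormOperator]
      module
  map_id X hX := by
    obtain ⟨antisymmetric, eigen⟩ := (hφ.mem_infinitesimalStabilizer_iff hι).mp hX
    rw [stabilizerProjection_apply, antisymmetric, eigen]
    module

theorem IsCayleyForm.finrank_infinitesimalStabilizer (hφ : IsCayleyForm φ)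
    (hι : Fintype.card ι = 8) :
    Module.finrank 𝕜 (infinitesimalStabilizer φ) = 21 := by
  have trace_eq := (hφ.isProj_stabilizerProjection hι).trace
  rw [hφ.trace_stabilizerProjection, hι] at trace_eq
  norm_num at trace_eq
  exact_mod_cast trace_eq.symm

end Projection

section Decomposition

variable {ι κ R : Type*} [Fintype ι] [Fintype κ] [DecidableEq ι] [DecidableEq κ] [CommRing R]

theorem IsCayleyForm.of_eq_wedge2_sub_sum {φ : ι → ι → ι → ι → R} (hφ : IsFourForm φ)
    (ω : κ → Matrix ι ι R) (antisymm : ∀ p i j, ω p j i = -ω p i j)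
    (orthogonal : ∀ p q, ∑ a, ∑ b, ω p a b * ω q a b = 8 * (1 : Matrix κ κ R) p q)
    (decomposition : ∀ i j k l, φ i j k l = wedge2 i j k l - ∑ p, ω p i j * ω p k l) :
    IsCayleyForm φ where
  toIsFourForm := hφ
  contract₂ i j k l := by
    have eigen (p : κ) : ∑ a, ∑ b, φ k l a b * ω p a b = -6 * ω p k l := by
      have expand : ∑ a, ∑ b, (∑ q, ω q k l * ω q a b) * ω p a b =
          ∑ q, ω q k l * ∑ a, ∑ b, ω q a b * ω p a b := by
        simp only [sum_mul, mul_sum, mul_assoc, sum_comm (t := univ (α := κ))]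
      have diagonal : ∑ q, ω q k l * (8 * (1 : Matrix κ κ R) q p) = 8 * ω p k l := by
        simp [Matrix.one_apply, mul_comm]
      simp only [decomposition, sub_mul, sum_sub_distrib, sum_wedge2_mul, expand, orthogonal,
        diagonal]
      linear_combination -antisymm p k l
    have expand : ∑ a, ∑ b, (∑ p, ω p i j * ω p a b) * φ k l a b =
        ∑ p, ω p i j * ∑ a, ∑ b, φ k l a b * ω p a b := by
      simp only [sum_mul, mul_sum, mul_assoc, mul_comm (φ _ _ _ _),
        sum_comm (t := univ (α := κ))]
    have contract_wedge2 : ∑ a, ∑ b, wedge2 i j a b * φ k l a b = 2 * φ i j k l := by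
      refine (sum_wedge2_mul i j (Matrix.of (φ k l))).trans ?_
      simp only [Matrix.of_apply, hφ.swap₃₄ k l i, hφ.swap_pairs i j]
      ring
    calc ∑ a, ∑ b, φ i j a b * φ k l a b
        = ∑ a, ∑ b, wedge2 i j a b * φ k l a b - ∑ p, ω p i j * (-6 * ω p k l) := by
          simp only [decomposition i j, sub_mul, sum_sub_distrib, expand, eigen]
      _ = 2 * φ i j k l + 6 * ∑ p, ω p i j * ω p k l := by
          simp only [contract_wedge2, mul_left_comm _ (-6 : R), ← mul_sum]
          ring
      _ = 6 * wedge2 i j k l - 4 * φ i j k l := by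
          linear_combination 6 * decomposition i j k l

end Decomposition

section StandardForm

theorem wedge4_eq_laplace (a b c d i j k l : Fin 8) :
    wedge4 a b c d i j k l =
      wedge2 a b i j * wedge2 c d k l - wedge2 a c i j * wedge2 b d k l +
        wedge2 a d i j * wedge2 b c k l + wedge2 b c i j * wedge2 a d k l -
        wedge2 b d i j * wedge2 a c k l + wedge2 c d i j * wedge2 a b k l := by
  have kd_eq (m n : Fin 8) : kd m n = (1 : Matrix (Fin 8) (Fin 8) ℝ) m n := rfl
  rw [wedge4, Matrix.det_succ_row_zero]
  simp only [Matrix.of_apply, Matrix.det_fin_three, Matrix.submatrix_apply, Matrix.cons_val,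
    Fin.sum_univ_four, Fin.succAbove, Fin.reduceSucc, Fin.reduceCastSucc, Fin.reduceLT,
    Fin.succ_zero_eq_one, Fin.succ_one_eq_two, Fin.castSucc_zero, Fin.castSucc_one, ↓reduceIte,
    Fin.coe_ofNat_eq_mod, lt_self_iff_false, not_lt_zero, kd_eq, wedge2_apply]
  ring

theorem isFourForm_wedge4 (a b c d : Fin 8) : IsFourForm (wedge4 a b c d) where
  swap₁₂ i j k l := by simp only [wedge4_eq_laplace, wedge2_apply]; ring
  swap₂₃ i j k l := by simp only [wedge4_eq_laplace, wedge2_apply]; ring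
  swap₃₄ i j k l := by simp only [wedge4_eq_laplace, wedge2_apply]; ring

theorem isFourForm_Phi : IsFourForm Phi := by
  have h := isFourForm_wedge4
  exact (h 0 1 2 7).neg.add (h 0 2 3 6) |>.sub (h 0 3 4 7) |>.sub (h 0 5 6 7)
    |>.add (h 0 1 4 6) |>.add (h 0 2 4 5) |>.sub (h 0 1 3 5) |>.sub (h 3 4 5 6)
    |>.sub (h 1 4 5 7) |>.sub (h 1 2 5 6) |>.sub (h 1 2 3 4) |>.sub (h 2 3 5 7)
    |>.sub (h 1 3 6 7) |>.add (h 2 4 6 7)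

/-- The basis `e_0 ∧ e_p - e_p ⌟ (e_0 ⌟ Φ)`, `p = 1, …, 7` (at index `p - 1`), of the
`-6`-eigenspace of `twoFormOperator Phi` on 2-forms. -/
def cayleyTwoForm : Fin 7 → Matrix (Fin 8) (Fin 8) ℝ :=
  ![wedge2 0 1 + wedge2 2 7 + wedge2 3 5 - wedge2 4 6,
    wedge2 0 2 - wedge2 1 7 - wedge2 3 6 - wedge2 4 5,
    wedge2 0 3 - wedge2 1 5 + wedge2 2 6 + wedge2 4 7,
    wedge2 0 4 + wedge2 1 6 + wedge2 2 5 - wedge2 3 7,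
    wedge2 0 5 + wedge2 1 3 - wedge2 2 4 + wedge2 6 7,
    wedge2 0 6 - wedge2 1 4 - wedge2 2 3 - wedge2 5 7,
    wedge2 0 7 + wedge2 1 2 + wedge2 3 4 + wedge2 5 6]

theorem cayleyTwoForm_antisymm (p : Fin 7) (i j : Fin 8) :
    cayleyTwoForm p j i = -cayleyTwoForm p i j := by
  have swap (a b : Fin 8) : (wedge2 a b j i : ℝ) = -wedge2 a b i j := by
    simp only [wedge2_apply]; ring
  fin_cases p <;>
    simp only [cayleyTwoForm, Fin.zero_eta, Fin.mk_one, Fin.reduceFinMk, Matrix.cons_val,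
      Matrix.add_apply, Matrix.sub_apply, swap] <;>
    ring

theorem cayleyTwoForm_orthogonal (p q : Fin 7) :
    ∑ a, ∑ b, cayleyTwoForm p a b * cayleyTwoForm q a b = 8 * (1 : Matrix _ _ ℝ) p q := by
  fin_cases p <;>
    simp only [cayleyTwoForm, Fin.zero_eta, Fin.mk_one, Fin.reduceFinMk, Matrix.cons_val,
      Matrix.add_apply, Matrix.sub_apply, add_mul, sub_mul, sum_add_distrib, sum_sub_distrib,
      sum_wedge2_mul] <;>
    fin_cases q <;> simp [wedge2_apply] <;> norm_num

theorem Phi_eq_wedge2_sub_sum (i j k l : Fin 8) :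
    Phi i j k l = wedge2 i j k l - ∑ p, cayleyTwoForm p i j * cayleyTwoForm p k l := by
  -- The hypothesis `b < a` orients the rewriting, so that only `a < b` survives in `expansion`.
  have swap {a b : Fin 8} (_ : b < a) : wedge2 a b = -(wedge2 b a : Matrix _ _ ℝ) :=
    wedge2_swap b a
  have self_eq_zero (a : Fin 8) : wedge2 a a = (0 : Matrix _ _ ℝ) := sub_self _
  have expansion := sum_wedge2_mul_wedge2 (R := ℝ) i j k l
  simp (disch := decide) only [Fin.sum_univ_eight, swap, self_eq_zero, Matrix.neg_apply,
    Matrix.zero_apply] at expansion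
  simp only [Phi, wedge4_eq_laplace, Fin.sum_univ_seven, cayleyTwoForm, Matrix.cons_val,
    Matrix.add_apply, Matrix.sub_apply]
  linear_combination expansion / 2

theorem isCayleyForm_Phi : IsCayleyForm Phi :=
  .of_eq_wedge2_sub_sum isFourForm_Phi cayleyTwoForm cayleyTwoForm_antisymm
    cayleyTwoForm_orthogonal Phi_eq_wedge2_sub_sum

end StandardForm

theorem spin7_stabilizer_antisymmetric_dim_21_general {ι 𝕜 : Type*} [Fintype ι] [DecidableEq ι]
    [Field 𝕜] [LinearOrder 𝕜] [IsStrictOrderedRing 𝕜] {φ : ι → ι → ι → ι → 𝕜}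
    (hφ : IsCayleyForm φ) (hι : Fintype.card ι = 8) :
    (∀ X ∈ infinitesimalStabilizer φ, ∀ i j, X i j = -X j i) ∧
      Module.finrank 𝕜 (infinitesimalStabilizer φ) = 21 := by
  refine ⟨fun X hX i j => ?_, hφ.finrank_infinitesimalStabilizer hι⟩
  have antisymmetric := ((hφ.mem_infinitesimalStabilizer_iff hι).mp hX).1
  exact congrFun₂ antisymmetric j i

/-- Every matrix in the infinitesimal stabilizer of `Φ` is antisymmetric, and the
stabilizer (the Lie algebra `spin(7) ⊂ so(8)`) has dimension 21. -/
theorem spin7_stabilizer_antisymmetric_dim_21 :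
    (∀ X ∈ Wstab, ∀ i j, X i j = -X j i) ∧ Module.finrank ℝ ↥Wstab = 21 := by
  exact spin7_stabilizer_antisymmetric_dim_21_general isCayleyForm_Phi (Fintype.card_fin 8)
end
end

section
/- Define Λ³₈ = {θ⌟Φ : θ a 1-form on ℝ^8} and Λ³₄₈ = {γ a 3-form on ℝ^8 : γ_{abc}Φ_{abci} = 0 for all i}. Then the map θ ↦ θ⌟Φ is injective, the 56-dimensional space of 3-forms on ℝ^8 is the orthogonal direct sum of Λ³₈ and Λ³₄₈ (with respect to ⟨γ,η⟩ = γ_{ijk}η_{ijk}), dim Λ³₈ = 8 and dim Λ³₄₈ = 48. -/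
/-!
We work in ℝ⁸ with the standard basis `e₀, …, e₇`.  A `k`-form is a totally antisymmetric
map `(Fin 8)^k → ℝ`; repeated indices are summed over `Fin 8` and `kd` is the Kronecker
delta.  `Phi` is the fundamental 4-form of the standard `Spin(7)`-structure on ℝ⁸,
`Φ = -e₀₁₂₇ + e₀₂₃₆ - e₀₃₄₇ - e₀₅₆₇ + e₀₁₄₆ + e₀₂₄₅ - e₀₁₃₅
     - e₃₄₅₆ - e₁₄₅₇ - e₁₂₅₆ - e₁₂₃₄ - e₂₃₅₇ - e₁₃₆₇ + e₂₄₆₇`.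
-/

noncomputable section

/-- Totally antisymmetric 3-tensors on ℝ⁸ (3-forms). -/
def ThreeForm : Submodule ℝ (Fin 8 → Fin 8 → Fin 8 → ℝ) where
  carrier := {γ | ∀ i j k, γ i j k = -γ j i k ∧ γ i j k = -γ i k j}
  zero_mem' := by intro i j k; constructor <;> simp
  add_mem' := by
    intro a b ha hb i j k
    constructor
    · simp only [Pi.add_apply, (ha i j k).1, (hb i j k).1]; ring
    · simp only [Pi.add_apply, (ha i j k).2, (hb i j k).2]; ring
  smul_mem' := by
    intro c a ha i j k
    constructor
    · simp only [Pi.smul_apply, smul_eq_mul, (ha i j k).1]; ring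
    · simp only [Pi.smul_apply, smul_eq_mul, (ha i j k).2]; ring

/-- Interior product with `Φ`: `θ ↦ θ⌟Φ`, `(θ⌟Φ)_{klm} = θ_s Φ_{sklm}`. -/
def intPhi : (Fin 8 → ℝ) →ₗ[ℝ] (Fin 8 → Fin 8 → Fin 8 → ℝ) where
  toFun θ := fun k l m => ∑ s, θ s * Phi s k l m
  map_add' θ η := by
    funext k l m
    simp [Pi.add_apply, add_mul, Finset.sum_add_distrib]
  map_smul' c θ := by
    funext k l m
    simp [Pi.smul_apply, smul_eq_mul, Finset.mul_sum, mul_assoc]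

/-- Contraction of a 3-tensor with `Φ`: `γ ↦ (γ_{abc}Φ_{abci})_i`. -/
def ctr3 : (Fin 8 → Fin 8 → Fin 8 → ℝ) →ₗ[ℝ] (Fin 8 → ℝ) where
  toFun γ := fun i => ∑ a, ∑ b, ∑ c, γ a b c * Phi a b c i
  map_add' γ η := by
    funext i
    simp [Pi.add_apply, add_mul, Finset.sum_add_distrib]
  map_smul' c γ := by
    funext i
    simp [Pi.smul_apply, smul_eq_mul, Finset.mul_sum, mul_assoc]

/-- `Λ³₈ = {θ⌟Φ : θ a 1-form}`. -/
def Lambda3_8 : Submodule ℝ (Fin 8 → Fin 8 → Fin 8 → ℝ) := LinearMap.range intPhi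

/-- `Λ³₄₈`: the 3-forms `γ` with `γ_{abc}Φ_{abci} = 0` for all `i`. -/
def Lambda3_48 : Submodule ℝ (Fin 8 → Fin 8 → Fin 8 → ℝ) := ThreeForm ⊓ LinearMap.ker ctr3

/-!
Write `Φ = ∑ ε_B e_B`, with signs `ε_B = ±1`, over the fourteen quadruples `B` on which it is
supported. These quadruples form a Steiner system `S(3, 4, 8)`: any three distinct indices lie in
exactly one of them. Hence in `∑ Φ_{sabc} Φ_{tabc}` a nonzero summand has `{s,a,b,c}` and
`{t,a,b,c}` equal to the same quadruple, so that `s = t`; each square being `1`, the sum for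
`s = t` counts the `7 · 6` pairs `(a, b)`, each of which determines `c`. Therefore contraction with
`Φ` after `θ ↦ θ⌟Φ` is multiplication by `-42`, which makes `θ ↦ θ⌟Φ` injective with image a
complement of the kernel of the contraction. The two maps are adjoint up to sign, whence the
orthogonality.
-/

section CoordForm

variable {ι I R : Type*} [Fintype ι] [DecidableEq I]

lemma exists_perm_of_image_eq {a x : ι → I} (ha : Function.Injective a)
    (h : Finset.univ.image x = Finset.univ.image a) : ∃ σ : Equiv.Perm ι, x = a ∘ σ := by
  have index (i : ι) : ∃ j, a j = x i := by
    simpa using h.subset (Finset.mem_image_of_mem x (Finset.mem_univ i))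
  choose σ hσ using index
  have surjective : Function.Surjective σ := fun j => by
    obtain ⟨i, hi⟩ : ∃ i, x i = a j := by
      simpa using h.superset (Finset.mem_image_of_mem a (Finset.mem_univ j))
    exact ⟨i, ha ((hσ i).trans hi)⟩
  exact ⟨.ofBijective σ (Finite.surjective_iff_bijective.mp surjective),
    funext fun i => (hσ i).symm⟩

variable [DecidableEq ι] [CommRing R]

variable (R) in
/-- The component at the multi-index `x` of the coordinate form `e_{a₁} ∧ ⋯ ∧ e_{aₙ}`, normalized
so that its component at `a` is `1` when the `aᵢ` are distinct. -/
def coordForm (a x : ι → I) : R := ((1 : Matrix I I R).submatrix a x).det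

lemma coordForm_self {a : ι → I} (ha : Function.Injective a) : coordForm R a a = 1 := by
  rw [coordForm, Matrix.submatrix_one a ha, Matrix.det_one]

lemma coordForm_comp_perm (a x : ι → I) (σ : Equiv.Perm ι) :
    coordForm R a (x ∘ σ) = (Equiv.Perm.sign σ : ℤ) * coordForm R a x :=
  Matrix.det_permute' σ ((1 : Matrix I I R).submatrix a x)

lemma exists_perm_of_coordForm_ne_zero {a x : ι → I} (h : coordForm R a x ≠ 0) :
    ∃ σ : Equiv.Perm ι, x = a ∘ σ := by
  rw [coordForm, Matrix.det_apply'] at h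
  obtain ⟨σ, -, hσ⟩ := Finset.exists_ne_zero_of_sum_ne_zero h
  refine ⟨σ, funext fun i => ?_⟩
  by_contra hi
  refine right_ne_zero_of_mul hσ (Finset.prod_eq_zero (Finset.mem_univ i) ?_)
  exact Matrix.one_apply_ne (Ne.symm hi)

lemma image_eq_of_coordForm_ne_zero {a x : ι → I} (h : coordForm R a x ≠ 0) :
    Finset.univ.image x = Finset.univ.image a := by
  obtain ⟨σ, rfl⟩ := exists_perm_of_coordForm_ne_zero h
  rw [← Finset.image_image, Finset.image_univ_equiv]

lemma coordForm_sq {a x : ι → I} (ha : Function.Injective a)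
    (h : Finset.univ.image x = Finset.univ.image a) : coordForm R a x ^ 2 = 1 := by
  obtain ⟨σ, rfl⟩ := exists_perm_of_image_eq ha h
  rw [coordForm_comp_perm, coordForm_self ha, mul_one, ← Int.cast_pow, ← Units.val_pow_eq_pow_val,
    Int.units_sq, Units.val_one, Int.cast_one]

end CoordForm

section AlternatingTensors

variable {R : Type*} [CommRing R] {n : ℕ} {I : Type*}

variable (R n I) in
/-- The `n`-forms on `R^I` in components: functions of `n` indices which a permutation of the
indices multiplies by its sign. Where `2` is a zero divisor this is weaker than being
alternating. -/
def alternatingTensors : Submodule R ((Fin n → I) → R) where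
  carrier := {γ | ∀ (σ : Equiv.Perm (Fin n)) x, γ (x ∘ σ) = (Equiv.Perm.sign σ : ℤ) * γ x}
  zero_mem' σ x := by simp
  add_mem' hγ hη σ x := by simp only [Pi.add_apply, hγ σ x, hη σ x, mul_add]
  smul_mem' c γ hγ σ x := by simp only [Pi.smul_apply, smul_eq_mul, hγ σ x, mul_left_comm]

lemma mem_alternatingTensors_of_swap {γ : (Fin (n + 1) → I) → R}
    (h : ∀ (i : Fin n) x, γ (x ∘ Equiv.swap i.castSucc i.succ) = -γ x) :
    γ ∈ alternatingTensors R (n + 1) I := by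
  intro σ
  have hσ : σ ∈ Submonoid.closure (Set.range fun i : Fin n => Equiv.swap i.castSucc i.succ) := by
    rw [Equiv.Perm.mclosure_swap_castSucc_succ]
    trivial
  induction hσ using Submonoid.closure_induction with
  | mem σ hσ =>
    obtain ⟨i, rfl⟩ := hσ
    intro x
    simp [h i x, Equiv.Perm.sign_swap (Fin.castSucc_lt_succ (i := i)).ne]
  | one => simp
  | mul σ τ _ _ hσ hτ =>
    intro x
    rw [Equiv.Perm.coe_mul, ← Function.comp_assoc, hτ, hσ]
    simp only [Equiv.Perm.sign_mul, Units.val_mul, Int.cast_mul]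
    ring

lemma coordForm_mem_alternatingTensors [DecidableEq I] (a : Fin n → I) :
    coordForm R a ∈ alternatingTensors R n I :=
  fun σ x => coordForm_comp_perm a x σ

lemma alternatingTensors.apply_eq_zero_of_not_injective [NoZeroDivisors R] [NeZero (2 : R)]
    {γ : (Fin n → I) → R} (hγ : γ ∈ alternatingTensors R n I) {x : Fin n → I}
    (hx : ¬ Function.Injective x) : γ x = 0 := by
  obtain ⟨i, j, hij, hne⟩ := Function.not_injective_iff.mp hx
  have hswap : x ∘ Equiv.swap i j = x := by
    rw [Equiv.comp_swap_eq_update, hij, Function.update_eq_self, ← hij, Function.update_eq_self]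
  have h := hγ (Equiv.swap i j) x
  rw [hswap, Equiv.Perm.sign_swap hne] at h
  refine (mul_eq_zero.mp ?_).resolve_left (two_ne_zero' R)
  push_cast at h
  linear_combination h

variable [LinearOrder I]

lemma alternatingTensors.eq_zero_of_forall_orderEmbedding [NoZeroDivisors R] [NeZero (2 : R)]
    {γ : (Fin n → I) → R} (hγ : γ ∈ alternatingTensors R n I) (h : ∀ t : Fin n ↪o I, γ t = 0) :
    γ = 0 := by
  funext x
  by_cases hx : Function.Injective x
  · have hmono : StrictMono (x ∘ Tuple.sort x) :=
      (Tuple.monotone_sort x).strictMono_of_injective (hx.comp (Tuple.sort x).injective)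
    have hsorted : γ (x ∘ Tuple.sort x) = 0 := h (OrderEmbedding.ofStrictMono _ hmono)
    have hsort := hγ (Tuple.sort x)⁻¹ (x ∘ Tuple.sort x)
    rw [hsorted, mul_zero] at hsort
    simpa [Function.comp_assoc] using hsort
  · exact alternatingTensors.apply_eq_zero_of_not_injective hγ hx

lemma coordForm_orderEmbedding (s t : Fin n ↪o I) :
    coordForm R s t = if s = t then 1 else 0 := by
  split_ifs with hst
  · rw [hst, coordForm_self t.injective]
  · by_contra hne
    obtain ⟨σ, hσ⟩ := exists_perm_of_coordForm_ne_zero hne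
    refine hst (OrderEmbedding.range_inj.mp ?_)
    rw [hσ, EquivLike.range_comp]

variable (R n I) in
/-- Restriction of an `n`-form to its components at increasing multi-indices. -/
def restrictIncreasing : alternatingTensors R n I →ₗ[R] (Fin n ↪o I) → R :=
  LinearMap.funLeft R R (fun t : Fin n ↪o I => ⇑t) ∘ₗ (alternatingTensors R n I).subtype

lemma restrictIncreasing_injective [NoZeroDivisors R] [NeZero (2 : R)] :
    Function.Injective (restrictIncreasing R n I) := by
  refine (injective_iff_map_eq_zero _).mpr fun γ hγ => Subtype.ext ?_
  exact alternatingTensors.eq_zero_of_forall_orderEmbedding γ.2 (congrFun hγ)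

lemma restrictIncreasing_surjective [Finite I] :
    Function.Surjective (restrictIncreasing R n I) := by
  classical
  have := Fintype.ofFinite I
  intro f
  refine ⟨⟨∑ s : Fin n ↪o I, f s • coordForm R s, Submodule.sum_mem _ fun s _ =>
    Submodule.smul_mem _ _ (coordForm_mem_alternatingTensors s)⟩, funext fun t => ?_⟩
  simp [restrictIncreasing, LinearMap.funLeft_apply, coordForm_orderEmbedding]

theorem finrank_alternatingTensors [NoZeroDivisors R] [NeZero (2 : R)] [Fintype I] :
    Module.finrank R (alternatingTensors R n I) = (Fintype.card I).choose n := by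
  have : Nontrivial R := ⟨2, 0, two_ne_zero' R⟩
  rw [(LinearEquiv.ofBijective (restrictIncreasing R n I)
      ⟨restrictIncreasing_injective, restrictIncreasing_surjective⟩).finrank_eq,
    Module.finrank_fintype_fun_eq_card, ← Nat.card_eq_fintype_card,
    Nat.card_congr Set.powersetCard.ofFinEmbEquiv, Set.powersetCard.card, Nat.card_eq_fintype_card]

end AlternatingTensors

section Complement

variable {R M N P : Type*} [Ring R] [AddCommGroup M] [AddCommGroup N] [AddCommGroup P]
  [Module R M] [Module R N] [Module R P]

lemma isCompl_range_ker_of_bijective_comp {f : M →ₗ[R] N} {g : N →ₗ[R] P}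
    (h : Function.Bijective (g ∘ₗ f)) : IsCompl (LinearMap.range f) (LinearMap.ker g) := by
  constructor
  · rw [Submodule.disjoint_def]
    rintro _ ⟨v, rfl⟩ hv
    rw [(map_eq_zero_iff (g ∘ₗ f) h.injective).mp hv, map_zero]
  · rw [codisjoint_iff_le_sup]
    intro w _
    obtain ⟨v, hv⟩ := h.surjective (g w)
    refine Submodule.mem_sup.mpr ⟨f v, ⟨v, rfl⟩, w - f v, ?_, add_sub_cancel _ _⟩
    rw [LinearMap.mem_ker, map_sub, sub_eq_zero]
    exact hv.symm

end Complement

/-- The supports of the terms of `Phi`, in the order and with the orientation used there. -/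
def phiBlock : Fin 14 → Fin 4 → Fin 8 :=
  ![![0, 1, 2, 7], ![0, 2, 3, 6], ![0, 3, 4, 7], ![0, 5, 6, 7], ![0, 1, 4, 6], ![0, 2, 4, 5],
    ![0, 1, 3, 5], ![3, 4, 5, 6], ![1, 4, 5, 7], ![1, 2, 5, 6], ![1, 2, 3, 4], ![2, 3, 5, 7],
    ![1, 3, 6, 7], ![2, 4, 6, 7]]

/-- The coefficients of the terms of `Phi`. -/
def phiSign : Fin 14 → ℝ := ![-1, 1, -1, -1, 1, 1, -1, -1, -1, -1, -1, -1, -1, 1]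

/-- The underlying set of a block. -/
def phiSupport (β : Fin 14) : Finset (Fin 8) := Finset.univ.image (phiBlock β)

/-- Being a block of the Steiner system `S(3, 4, 8)` formed by the supports of the terms of
`Phi`. -/
def IsPhiBlock (S : Finset (Fin 8)) : Prop := ∃ β, phiSupport β = S

instance : DecidablePred IsPhiBlock := fun S =>
  inferInstanceAs (Decidable (∃ β, phiSupport β = S))

lemma phiBlock_injective (β : Fin 14) : Function.Injective (phiBlock β) := by
  revert β
  decide

lemma phiSign_sq (β : Fin 14) : phiSign β ^ 2 = 1 := by
  fin_cases β <;> simp [phiSign]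

lemma card_phiSupport (β : Fin 14) : (phiSupport β).card = 4 := by
  rw [phiSupport, Finset.card_image_of_injective _ (phiBlock_injective β), Finset.card_fin]

lemma card_phiSupport_inter_le {β β' : Fin 14} (h : β ≠ β') :
    (phiSupport β ∩ phiSupport β').card ≤ 2 := by
  revert β β'
  decide +kernel

lemma disjoint_powersetCard_phiSupport {β β' : Fin 14} (h : β ≠ β') :
    Disjoint ((phiSupport β).powersetCard 3) ((phiSupport β').powersetCard 3) := by
  refine Finset.disjoint_left.mpr fun T hT hT' => ?_
  rw [Finset.mem_powersetCard] at hT hT'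
  have hle := Finset.card_le_card (Finset.subset_inter hT.1 hT'.1)
  have := card_phiSupport_inter_le h
  omega

-- The blocks contain `14 · 4` triples, which are distinct and hence are all `56` triples.
lemma biUnion_powersetCard_phiSupport :
    Finset.univ.biUnion (fun β => (phiSupport β).powersetCard 3) =
      (Finset.univ : Finset (Fin 8)).powersetCard 3 := by
  refine Finset.eq_of_subset_of_card_le (Finset.biUnion_subset.mpr fun β _ =>
    Finset.powersetCard_mono (Finset.subset_univ _)) ?_
  rw [Finset.card_biUnion fun β _ β' _ h => disjoint_powersetCard_phiSupport h]
  simp only [Finset.card_powersetCard, card_phiSupport, Finset.sum_const, Finset.card_fin]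
  decide

lemma exists_subset_phiSupport {T : Finset (Fin 8)} (hT : T.card = 3) :
    ∃ β, T ⊆ phiSupport β := by
  have hmem := Finset.mem_powersetCard_univ.mpr hT
  rw [← biUnion_powersetCard_phiSupport, Finset.mem_biUnion] at hmem
  obtain ⟨β, -, hβ⟩ := hmem
  exact ⟨β, (Finset.mem_powersetCard.mp hβ).1⟩

lemma phiSupport_injective : Function.Injective phiSupport := by
  intro β β' h
  by_contra hne
  have hcard := card_phiSupport_inter_le hne
  rw [h, Finset.inter_self, card_phiSupport] at hcard
  omega

lemma IsPhiBlock.card_eq {S : Finset (Fin 8)} (hS : IsPhiBlock S) : S.card = 4 := by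
  obtain ⟨β, rfl⟩ := hS
  exact card_phiSupport β

lemma IsPhiBlock.eq_of_subset {S S' T : Finset (Fin 8)} (hS : IsPhiBlock S) (hS' : IsPhiBlock S')
    (hT : T.card = 3) (hTS : T ⊆ S) (hTS' : T ⊆ S') : S = S' := by
  obtain ⟨β, rfl⟩ := hS
  obtain ⟨β', rfl⟩ := hS'
  by_contra hne
  exact Finset.disjoint_left.mp
    (disjoint_powersetCard_phiSupport (ne_of_apply_ne phiSupport hne))
    (Finset.mem_powersetCard.mpr ⟨hTS, hT⟩) (Finset.mem_powersetCard.mpr ⟨hTS', hT⟩)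

lemma IsPhiBlock.eq_of_insert {s t : Fin 8} {T : Finset (Fin 8)} (hT : T.card ≤ 3)
    (hs : IsPhiBlock (insert s T)) (ht : IsPhiBlock (insert t T)) : s = t := by
  have hle := Finset.card_insert_le s T
  rw [hs.card_eq] at hle
  have hsT : s ∉ T := fun hmem => by
    have := hs.card_eq
    rw [Finset.insert_eq_of_mem hmem] at this
    omega
  exact (Finset.insert_inj hsT).mp <|
    hs.eq_of_subset ht (by omega) (Finset.subset_insert s T) (Finset.subset_insert t T)

lemma exists_isPhiBlock_insert {T : Finset (Fin 8)} (hT : T.card = 3) :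
    ∃ c, IsPhiBlock (insert c T) := by
  obtain ⟨β, hβ⟩ := exists_subset_phiSupport hT
  obtain ⟨c, -, hc⟩ := Finset.exists_eq_insert_iff.mpr
    ⟨hβ, by rw [hT, card_phiSupport]⟩
  exact ⟨c, β, hc.symm⟩

lemma card_isPhiBlock_insert {T : Finset (Fin 8)} (hT : T.card ≤ 3) :
    Fintype.card {c // IsPhiBlock (insert c T)} = if T.card = 3 then 1 else 0 := by
  split_ifs with h
  · obtain ⟨c, hc⟩ := exists_isPhiBlock_insert h
    exact Fintype.card_eq_one_iff.mpr ⟨⟨c, hc⟩, fun d => Subtype.ext (d.2.eq_of_insert hT hc)⟩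
  · refine Fintype.card_eq_zero_iff.mpr ⟨fun c => ?_⟩
    have hle := Finset.card_insert_le c.1 T
    rw [c.2.card_eq] at hle
    omega

lemma sum_card_eq_three (s : Fin 8) :
    (∑ a, ∑ b, if ({s, a, b} : Finset (Fin 8)).card = 3 then 1 else 0) = 42 := by
  revert s
  decide +kernel

lemma sum_isPhiBlock (s : Fin 8) :
    (∑ a, ∑ b, ∑ c, if IsPhiBlock {s, a, b, c} then 1 else 0) = 42 := by
  rw [← sum_card_eq_three s]
  refine Finset.sum_congr rfl fun a _ => Finset.sum_congr rfl fun b _ => ?_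
  rw [← card_isPhiBlock_insert Finset.card_le_three, Fintype.card_subtype, Finset.card_filter]
  refine Finset.sum_congr rfl fun c _ => ?_
  rw [Finset.insert_comm c s, Finset.insert_comm c a, Finset.pair_comm c b]

lemma wedge4_eq_coordForm (a b c d : Fin 8) (x : Fin 4 → Fin 8) :
    wedge4 a b c d (x 0) (x 1) (x 2) (x 3) = coordForm ℝ ![a, b, c, d] x := by
  rw [wedge4, coordForm]
  congr 1
  ext i j
  fin_cases i <;> fin_cases j <;> rfl

lemma Phi_eq_sum (x : Fin 4 → Fin 8) :
    Phi (x 0) (x 1) (x 2) (x 3) = ∑ β, phiSign β * coordForm ℝ (phiBlock β) x := by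
  simp only [Phi, wedge4_eq_coordForm, Fin.sum_univ_succ, phiSign, phiBlock, Fin.succ_zero_eq_one,
    Fin.succ_one_eq_two, Fin.reduceSucc, Matrix.cons_val, Finset.univ_eq_empty, Finset.sum_empty]
  ring

lemma Phi_mem_alternatingTensors :
    (fun x : Fin 4 → Fin 8 => Phi (x 0) (x 1) (x 2) (x 3)) ∈ alternatingTensors ℝ 4 (Fin 8) := by
  have h : (fun x : Fin 4 → Fin 8 => Phi (x 0) (x 1) (x 2) (x 3)) =
      ∑ β, phiSign β • coordForm ℝ (phiBlock β) := by
    funext x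
    simp [Phi_eq_sum]
  rw [h]
  exact Submodule.sum_mem _ fun β _ =>
    Submodule.smul_mem _ _ (coordForm_mem_alternatingTensors (phiBlock β))

lemma Phi_swap_right (i j k l : Fin 8) : Phi i j k l = -Phi i j l k := by
  simpa [Equiv.swap_apply_def] using Phi_mem_alternatingTensors (Equiv.swap 2 3) ![i, j, l, k]

lemma Phi_swap_middle (i j k l : Fin 8) : Phi i j k l = -Phi i k j l := by
  simpa [Equiv.swap_apply_def] using Phi_mem_alternatingTensors (Equiv.swap 1 2) ![i, k, j, l]

lemma Phi_rotate (i j k l : Fin 8) : Phi j k l i = -Phi i j k l := by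
  simpa [sign_finRotate, pow_succ] using Phi_mem_alternatingTensors (finRotate 4) ![i, j, k, l]

lemma insert_eq_image_vec (i j k l : Fin 8) :
    ({i, j, k, l} : Finset (Fin 8)) = Finset.univ.image ![i, j, k, l] := by
  ext m
  simp [Fin.exists_fin_succ, eq_comm]

lemma isPhiBlock_of_Phi_ne_zero {i j k l : Fin 8} (h : Phi i j k l ≠ 0) :
    IsPhiBlock {i, j, k, l} := by
  obtain ⟨β, -, hβ⟩ := Finset.exists_ne_zero_of_sum_ne_zero (Phi_eq_sum ![i, j, k, l] ▸ h)
  refine ⟨β, ?_⟩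
  rw [insert_eq_image_vec]
  exact (image_eq_of_coordForm_ne_zero (right_ne_zero_of_mul hβ)).symm

lemma Phi_sq_of_isPhiBlock {i j k l : Fin 8} (h : IsPhiBlock {i, j, k, l}) :
    Phi i j k l ^ 2 = 1 := by
  obtain ⟨β, hβ⟩ := h
  rw [insert_eq_image_vec] at hβ
  have other (β' : Fin 14) (hne : β' ≠ β) : coordForm ℝ (phiBlock β') ![i, j, k, l] = 0 := by
    by_contra hzero
    exact hne (phiSupport_injective ((image_eq_of_coordForm_ne_zero hzero).symm.trans hβ.symm))
  have hPhi : Phi i j k l = phiSign β * coordForm ℝ (phiBlock β) ![i, j, k, l] :=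
    (Phi_eq_sum ![i, j, k, l]).trans <|
      Fintype.sum_eq_single β fun β' hne => by rw [other β' hne, mul_zero]
  rw [hPhi, mul_pow, phiSign_sq, coordForm_sq (phiBlock_injective β) hβ.symm, one_mul]

lemma Phi_mul_self (i j k l : Fin 8) :
    Phi i j k l * Phi i j k l = if IsPhiBlock {i, j, k, l} then 1 else 0 := by
  split_ifs with h
  · rw [← sq, Phi_sq_of_isPhiBlock h]
  · rw [mul_self_eq_zero]
    exact not_imp_comm.mp isPhiBlock_of_Phi_ne_zero h

lemma Phi_mul_Phi_of_ne {s t : Fin 8} (h : s ≠ t) (a b c : Fin 8) :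
    Phi s a b c * Phi t a b c = 0 := by
  by_contra hne
  exact h <| IsPhiBlock.eq_of_insert Finset.card_le_three
    (isPhiBlock_of_Phi_ne_zero (left_ne_zero_of_mul hne))
    (isPhiBlock_of_Phi_ne_zero (right_ne_zero_of_mul hne))

theorem sum_Phi_mul_Phi (s t : Fin 8) :
    ∑ a, ∑ b, ∑ c, Phi s a b c * Phi t a b c = if s = t then 42 else 0 := by
  split_ifs with h
  · subst h
    simp only [Phi_mul_self]
    exact_mod_cast sum_isPhiBlock s
  · simp only [Phi_mul_Phi_of_ne h, Finset.sum_const_zero]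

lemma intPhi_apply (θ : Fin 8 → ℝ) (a b c : Fin 8) :
    intPhi θ a b c = ∑ s, θ s * Phi s a b c := rfl

lemma ctr3_apply (γ : Fin 8 → Fin 8 → Fin 8 → ℝ) (i : Fin 8) :
    ctr3 γ i = -∑ a, ∑ b, ∑ c, γ a b c * Phi i a b c := by
  simp [ctr3, Phi_rotate i]

lemma intPhi_mem_ThreeForm (θ : Fin 8 → ℝ) : intPhi θ ∈ ThreeForm := by
  intro i j k
  simp only [intPhi_apply, ← Finset.sum_neg_distrib, ← mul_neg]
  exact ⟨by simp only [← Phi_swap_middle], by simp only [← Phi_swap_right]⟩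

theorem sum_intPhi_mul (θ : Fin 8 → ℝ) (η : Fin 8 → Fin 8 → Fin 8 → ℝ) :
    ∑ a, ∑ b, ∑ c, intPhi θ a b c * η a b c = -∑ s, θ s * ctr3 η s := by
  simp only [intPhi_apply, ctr3_apply, Finset.sum_mul, Finset.mul_sum, mul_neg,
    Finset.sum_neg_distrib, neg_neg]
  calc ∑ a, ∑ b, ∑ c, ∑ s, θ s * Phi s a b c * η a b c
      = ∑ a, ∑ b, ∑ s, ∑ c, θ s * Phi s a b c * η a b c :=
        Finset.sum_congr rfl fun a _ => Finset.sum_congr rfl fun b _ => Finset.sum_comm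
    _ = ∑ a, ∑ s, ∑ b, ∑ c, θ s * Phi s a b c * η a b c :=
        Finset.sum_congr rfl fun a _ => Finset.sum_comm
    _ = ∑ s, ∑ a, ∑ b, ∑ c, θ s * Phi s a b c * η a b c := Finset.sum_comm
    _ = ∑ s, ∑ a, ∑ b, ∑ c, θ s * (η a b c * Phi s a b c) := by
        simp only [mul_assoc, mul_comm (η _ _ _)]

theorem ctr3_intPhi (θ : Fin 8 → ℝ) : ctr3 (intPhi θ) = (-42 : ℝ) • θ := by
  funext i
  have hself : ∑ a, ∑ b, ∑ c, intPhi θ a b c * Phi i a b c = 42 * θ i := by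
    rw [sum_intPhi_mul]
    simp only [ctr3_apply, sum_Phi_mul_Phi]
    simp [mul_comm]
  rw [ctr3_apply, hself, Pi.smul_apply, smul_eq_mul, neg_mul]

lemma bijective_ctr3_comp_intPhi : Function.Bijective (ctr3 ∘ₗ intPhi) := by
  have h : ⇑(ctr3 ∘ₗ intPhi) = fun θ => (-42 : ℝ) • θ := funext ctr3_intPhi
  rw [h]
  exact MulAction.bijective₀ (by norm_num)

lemma intPhi_injective : Function.Injective intPhi :=
  Function.Injective.of_comp (f := ctr3) bijective_ctr3_comp_intPhi.injective

lemma isCompl_Lambda3_8_ker_ctr3 : IsCompl Lambda3_8 (LinearMap.ker ctr3) :=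
  isCompl_range_ker_of_bijective_comp bijective_ctr3_comp_intPhi

lemma Lambda3_8_le_ThreeForm : Lambda3_8 ≤ ThreeForm :=
  LinearMap.range_le_iff_comap.mpr <| eq_top_iff.mpr fun θ _ => intPhi_mem_ThreeForm θ

lemma Lambda3_8_sup_Lambda3_48 : Lambda3_8 ⊔ Lambda3_48 = ThreeForm := by
  rw [Lambda3_48, inf_comm, ← sup_inf_assoc_of_le _ Lambda3_8_le_ThreeForm,
    isCompl_Lambda3_8_ker_ctr3.sup_eq_top, top_inf_eq]

lemma Lambda3_8_inf_Lambda3_48 : Lambda3_8 ⊓ Lambda3_48 = ⊥ :=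
  (isCompl_Lambda3_8_ker_ctr3.disjoint.mono_right inf_le_right).eq_bot

lemma sum_mul_eq_zero_of_mem_Lambda3 {γ η : Fin 8 → Fin 8 → Fin 8 → ℝ} (hγ : γ ∈ Lambda3_8)
    (hη : η ∈ Lambda3_48) : ∑ i, ∑ j, ∑ k, γ i j k * η i j k = 0 := by
  obtain ⟨θ, rfl⟩ := hγ
  have hctr : ctr3 η = 0 := hη.2
  simp [sum_intPhi_mul, hctr]

lemma mem_ThreeForm_iff {γ : Fin 8 → Fin 8 → Fin 8 → ℝ} :
    γ ∈ ThreeForm ↔ (fun x => γ (x 0) (x 1) (x 2)) ∈ alternatingTensors ℝ 3 (Fin 8) := by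
  constructor
  · intro h
    refine mem_alternatingTensors_of_swap fun i x => ?_
    fin_cases i
    · simpa [Equiv.swap_apply_def] using (h (x 1) (x 0) (x 2)).1
    · simpa [Equiv.swap_apply_def] using (h (x 0) (x 2) (x 1)).2
  · intro h i j k
    exact ⟨by simpa [Equiv.swap_apply_def] using h (Equiv.swap 0 1) ![j, i, k],
      by simpa [Equiv.swap_apply_def] using h (Equiv.swap 1 2) ![i, k, j]⟩

/-- Three-forms as functions of three separate indices correspond to `3`-forms as functions of a
multi-index. -/
def threeFormEquiv : ThreeForm ≃ₗ[ℝ] alternatingTensors ℝ 3 (Fin 8) where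
  toFun γ := ⟨fun x => γ.1 (x 0) (x 1) (x 2), mem_ThreeForm_iff.mp γ.2⟩
  map_add' _ _ := rfl
  map_smul' _ _ := rfl
  invFun γ := ⟨fun i j k => γ.1 ![i, j, k], mem_ThreeForm_iff.mpr <| by
    convert γ.2 using 3 with x
    exact FinVec.etaExpand_eq x⟩
  left_inv _ := rfl
  right_inv γ := by
    ext x
    exact congrArg γ.1 (FinVec.etaExpand_eq x)

lemma finrank_ThreeForm : Module.finrank ℝ ThreeForm = 56 := by
  rw [threeFormEquiv.finrank_eq, finrank_alternatingTensors, Fintype.card_fin]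
  rfl

lemma finrank_Lambda3_8 : Module.finrank ℝ Lambda3_8 = 8 :=
  (LinearMap.finrank_range_of_inj intPhi_injective).trans (Module.finrank_fin_fun ℝ)

lemma finrank_Lambda3_48 : Module.finrank ℝ Lambda3_48 = 48 := by
  have h := Submodule.finrank_sup_add_finrank_inf_eq Lambda3_8 Lambda3_48
  rw [Lambda3_8_sup_Lambda3_48, Lambda3_8_inf_Lambda3_48, finrank_ThreeForm, finrank_Lambda3_8,
    finrank_bot] at h
  omega

/-- `θ ↦ θ⌟Φ` is injective, and the 56-dimensional space of 3-forms on ℝ⁸ is the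
orthogonal direct sum of `Λ³₈` (dimension 8) and `Λ³₄₈` (dimension 48). -/
theorem spin7_three_form_decomposition :
    Function.Injective ⇑intPhi ∧
    Lambda3_8 ⊔ Lambda3_48 = ThreeForm ∧
    Lambda3_8 ⊓ Lambda3_48 = ⊥ ∧
    (∀ γ ∈ Lambda3_8, ∀ η ∈ Lambda3_48, (∑ i, ∑ j, ∑ k, γ i j k * η i j k) = 0) ∧
    Module.finrank ℝ ↥ThreeForm = 56 ∧
    Module.finrank ℝ ↥Lambda3_8 = 8 ∧
    Module.finrank ℝ ↥Lambda3_48 = 48 := by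
  exact ⟨intPhi_injective, Lambda3_8_sup_Lambda3_48, Lambda3_8_inf_Lambda3_48,
    fun _ hγ _ hη => sum_mul_eq_zero_of_mem_Lambda3 hγ hη, finrank_ThreeForm, finrank_Lambda3_8,
    finrank_Lambda3_48⟩
end
end
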